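/- Let W be the group of ℤ-linear automorphisms g of V = (Fin 7 → ℤ) satisfying ⟨g x, g y⟩ = ⟨x, y⟩ for all x, y ∈ V and g K = K. Every element of W maps lines to lines, so W acts ℚ-linearly on the ℚ-vector space 𝒱 of functions from the set of lines to ℚ by (g ⬝ v)(L) = v(g⁻¹ L). Then there exist W-invariant subspaces U₁, U₂, U₃ of 𝒱 of dimensions 1, 6 and 20 respectively, such that 𝒱 is the internal direct sum U₁ ⊕ U₂ ⊕ U₃, and each Uᵢ is irreducible, i.e. the only W-invariant subspaces of Uᵢ are 0 and Uᵢ itself. -/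

import Mathlib

/-- The symmetric bilinear form of signature (1,6) on the lattice `Fin 7 → ℤ`,
modelling the Picard lattice of a smooth cubic surface. -/
def B (x y : Fin 7 → ℤ) : ℤ :=
  x 0 * y 0 - x 1 * y 1 - x 2 * y 2 - x 3 * y 3 - x 4 * y 4 - x 5 * y 5 - x 6 * y 6

/-- The canonical class `K = (-3,1,1,1,1,1,1)`. -/
def K : Fin 7 → ℤ := ![-3, 1, 1, 1, 1, 1, 1]

/-- A line is a vector `L` with `⟨L,L⟩ = -1` and `⟨L,K⟩ = -1`. -/
def IsLine (L : Fin 7 → ℤ) : Prop := B L L = -1 ∧ B L K = -1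

/-- The set of ℤ-linear automorphisms of the lattice preserving the form and fixing `K`:
the Weyl group of `E₆`. -/
def Wset : Set ((Fin 7 → ℤ) ≃ₗ[ℤ] (Fin 7 → ℤ)) :=
  {g | (∀ x y, B (g x) (g y) = B x y) ∧ g K = K}

/-- The ℚ-vector space of functions from the set of lines to ℚ. -/
abbrev Vq : Type := {L : Fin 7 → ℤ // IsLine L} → ℚ

/-- A subspace `U` of the space of ℚ-valued functions on the 27 lines is `W`-invariant if
for every `g ∈ W` and every `v ∈ U`, the function `g ⬝ v : L ↦ v (g⁻¹ L)` (characterized by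
`(g ⬝ v) (g L) = v L`) again belongs to `U`. -/
def IsWInvariant (U : Submodule ℚ Vq) : Prop :=
  ∀ g ∈ Wset, ∀ v ∈ U, ∀ w : Vq,
    (∀ L M : {L : Fin 7 → ℤ // IsLine L},
      g (L : Fin 7 → ℤ) = (M : Fin 7 → ℤ) → w M = v L) → w ∈ U

/-!
Let `A` be the matrix of intersection numbers of the 27 lines. It satisfies `A² = -6A + 5J` and
`AJ = 9J`, where `J` is the all-ones matrix, so `A (A - 9) (A + 6) = 0` and the function space is
the direct sum of the eigenspaces of `A` for `9`, `-6` and `0`. Their dimensions `1`, `6`, `20` are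
read off from the traces `27`, `-27`, `297` of `1`, `A`, `A²`.

Each eigenspace is irreducible because the stabilizer of a line has only three orbits on the lines,
distinguished by the intersection number `-1`, `0` or `1` with the fixed line: every nonzero
invariant subspace contains a nonzero function that is constant on these orbits, and such functions
form a space of dimension three. Reflections in differences of skew lines supply enough elements of
the Weyl group for both transitivity and this orbit count.
-/

section EigenspaceDecomposition

open Module Polynomial

variable {k V ι : Type*} [Field k] [AddCommGroup V] [Module k V] {f : End k V} {μ : ι → k}

theorem sum_finrank_le_finrank_of_iSupIndep [FiniteDimensional k V] [Fintype ι]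
    {U : ι → Submodule k V} (hU : iSupIndep U) {Z : Submodule k V} (hZ : ∀ i, U i ≤ Z) :
    ∑ i, finrank k (U i) ≤ finrank k Z := by
  classical
  calc ∑ i, finrank k (U i) = finrank k (Π₀ i, U i) := (finrank_directSum k (U ·)).symm
    _ = finrank k ↥(⨆ i, U i) := by
      rw [Submodule.iSup_eq_range_dfinsupp_lsum,
        LinearMap.finrank_range_of_inj hU.dfinsupp_lsum_injective]
    _ ≤ finrank k Z := Submodule.finrank_mono (iSup_le hZ)

theorem ker_aeval_prod_X_sub_C_le_iSup_eigenspace (hμ : Function.Injective μ) (s : Finset ι) :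
    LinearMap.ker (aeval f (∏ i ∈ s, (X - C (μ i)))) ≤ ⨆ i ∈ s, f.eigenspace (μ i) := by
  classical
  induction s using Finset.induction_on with
  | empty => simp [End.one_eq_id]
  | insert i s hi ih =>
    have coprime : IsCoprime (X - C (μ i)) (∏ j ∈ s, (X - C (μ j))) :=
      IsCoprime.prod_right fun j hj =>
        isCoprime_X_sub_C_of_isUnit_sub (sub_ne_zero.2 (hμ.ne (by grind))).isUnit
    rw [Finset.prod_insert hi, ← sup_ker_aeval_eq_ker_aeval_mul_of_coprime f coprime,
      Finset.iSup_insert]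
    refine sup_le_sup (le_of_eq ?_) ih
    simp [End.eigenspace_def, Algebra.algebraMap_eq_smul_one]

theorem isInternal_eigenspace_of_aeval_prod_eq_zero [Fintype ι] [DecidableEq ι]
    (hμ : Function.Injective μ) (hf : aeval f (∏ i, (X - C (μ i))) = 0) :
    DirectSum.IsInternal fun i => f.eigenspace (μ i) := by
  refine DirectSum.isInternal_submodule_of_iSupIndep_of_iSup_eq_top
    (f.eigenspaces_iSupIndep.comp hμ) (top_unique ?_)
  simpa [hf] using ker_aeval_prod_X_sub_C_le_iSup_eigenspace (f := f) hμ Finset.univ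

theorem pow_apply_of_mem_eigenspace {a : k} {v : V} (hv : v ∈ f.eigenspace a) (n : ℕ) :
    (f ^ n) v = a ^ n • v := by
  obtain rfl | hv₀ := eq_or_ne v 0
  · simp
  · exact End.HasEigenvector.pow_apply ⟨hv, hv₀⟩ n

theorem trace_pow_eq_sum_finrank_eigenspace [FiniteDimensional k V] [Fintype ι] [DecidableEq ι]
    (h : DirectSum.IsInternal fun i => f.eigenspace (μ i)) (n : ℕ) :
    LinearMap.trace k V (f ^ n) = ∑ i, μ i ^ n * finrank k (f.eigenspace (μ i)) := by
  have mapsTo (i : ι) : Set.MapsTo (f ^ n) (f.eigenspace (μ i)) (f.eigenspace (μ i)) :=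
    End.mapsTo_genEigenspace_of_comm (Commute.pow_right rfl n) (μ i) 1
  rw [LinearMap.trace_eq_sum_trace_restrict h mapsTo]
  refine Finset.sum_congr rfl fun i _ => ?_
  have restrict_eq : (f ^ n).restrict (mapsTo i) = μ i ^ n • LinearMap.id := by
    ext v
    exact pow_apply_of_mem_eigenspace v.2 n
  rw [restrict_eq, map_smul, LinearMap.trace_id, smul_eq_mul]

end EigenspaceDecomposition

section PermutationRepresentation

open Module MulAction

variable (k G : Type*) {X : Type*} [Field k] [Group G] [MulAction G X]

variable (X) in
/-- The permutation representation of `G` on functions `X → k`, by left translation; Mathlib's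
`Representation.ofMulAction` lives on finitely supported functions instead. -/
def permRep : Representation k G (X → k) where
  toFun g := LinearMap.funLeft k k (g⁻¹ • ·)
  map_one' := by ext; simp [LinearMap.funLeft_apply]
  map_mul' g h := by ext; simp [LinearMap.funLeft_apply, mul_smul]

/-- The zonal functions on `X` with pole `x₀`: those fixed by the stabilizer of `x₀`. -/
noncomputable def zonal (x₀ : X) : Submodule k (X → k) :=
  Representation.invariants ((permRep k G X).comp (stabilizer G x₀).subtype)

variable {k G}

theorem permRep_apply (g : G) (v : X → k) (x : X) : permRep k G X g v x = v (g⁻¹ • x) := rfl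

theorem permRep_single [DecidableEq X] (g : G) (x : X) (a : k) :
    permRep k G X g (Pi.single x a) = Pi.single (g • x) a := by
  ext y
  simp only [permRep_apply, Pi.single_apply, inv_smul_eq_iff]

theorem mem_zonal {x₀ : X} {f : X → k} :
    f ∈ zonal k G x₀ ↔ ∀ g ∈ stabilizer G x₀, permRep k G X g f = f := by
  simp [zonal]

theorem finrank_zonal_le (x₀ : X) [Finite (orbitRel.Quotient (stabilizer G x₀) X)] :
    finrank k (zonal k G x₀) ≤ Nat.card (orbitRel.Quotient (stabilizer G x₀) X) := by
  have := Fintype.ofFinite (orbitRel.Quotient (stabilizer G x₀) X)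
  let sample : zonal k G x₀ →ₗ[k] orbitRel.Quotient (stabilizer G x₀) X → k :=
    LinearMap.funLeft k k Quotient.out ∘ₗ (zonal k G x₀).subtype
  have sample_injective : Function.Injective sample := by
    refine (injective_iff_map_eq_zero sample).2 fun f hf => Subtype.ext <| funext fun x => ?_
    obtain ⟨g, hg⟩ : (⟦x⟧ : orbitRel.Quotient (stabilizer G x₀) X).out ∈
        orbit (stabilizer G x₀) x := Quotient.mk_out (s := orbitRel _ X) x
    calc f.1 x = permRep k G X g f.1 (g • x) := by simp [permRep_apply, Subgroup.smul_def]
      _ = f.1 (⟦x⟧ : orbitRel.Quotient (stabilizer G x₀) X).out := by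
        rw [mem_zonal.1 f.2 g g.2, ← hg]
      _ = 0 := congrFun hf ⟦x⟧
  simpa [Nat.card_eq_fintype_card] using
    LinearMap.finrank_le_finrank_of_injective sample_injective

-- The projection of the delta function at `x₀` onto `U` along `C` is zonal, and it is nonzero
-- because the translates of this delta function span all functions.
theorem inf_zonal_ne_bot [Finite X] [IsPretransitive G X] {U C : Submodule k (X → k)}
    (hU : U ∈ (permRep k G X).invtSubmodule) (hC : C ∈ (permRep k G X).invtSubmodule)
    (hUC : IsCompl U C) (hU₀ : U ≠ ⊥) (x₀ : X) : U ⊓ zonal k G x₀ ≠ ⊥ := by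
  classical
  let P := U.projection C hUC
  have map_translate (g : G) (v : X → k) : P (permRep k G X g v) = permRep k G X g (P v) := by
    have : Commute P (permRep k G X g) :=
      (LinearMap.IsIdempotentElem.commute_iff (Submodule.isIdempotentElem_projection hUC)).2
        ⟨by simpa using (Representation.mem_invtSubmodule _).1 hU g,
          by simpa using (Representation.mem_invtSubmodule _).1 hC g⟩
    exact LinearMap.congr_fun this v
  have zonal_mem : P (Pi.single x₀ 1) ∈ zonal k G x₀ := mem_zonal.2 fun g hg => by
    rw [← map_translate, permRep_single, mem_stabilizer_iff.1 hg]
  contrapose! hU₀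
  have P_single : P (Pi.single x₀ 1) = 0 := by
    rw [← Submodule.mem_bot k, ← hU₀]
    exact ⟨Submodule.projection_apply_mem hUC _, zonal_mem⟩
  have P_eq_zero : P = 0 := (Pi.basisFun k X).ext fun x => by
    obtain ⟨g, rfl⟩ := exists_smul_eq G x₀ x
    rw [Pi.basisFun_apply, ← permRep_single, map_translate, P_single, map_zero,
      LinearMap.zero_apply]
  calc U = LinearMap.range P := (Submodule.range_projection hUC).symm
    _ = ⊥ := by rw [P_eq_zero, LinearMap.range_zero]

theorem eigenspace_toLin'_mem_invtSubmodule [Fintype X] [DecidableEq X] {A : Matrix X X k}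
    (hA : ∀ (g : G) x y, A (g • x) (g • y) = A x y) (μ : k) :
    End.eigenspace A.toLin' μ ∈ (permRep k G X).invtSubmodule := by
  refine (Representation.mem_invtSubmodule _).2 fun g =>
    End.mapsTo_genEigenspace_of_comm (LinearMap.ext fun v => funext fun x => ?_) μ 1
  simp only [End.mul_apply, permRep_apply, Matrix.toLin'_apply, Matrix.mulVec, dotProduct]
  rw [← Equiv.sum_comp (toPerm g)]
  refine Finset.sum_congr rfl fun y _ => ?_
  rw [toPerm_apply, inv_smul_smul, ← hA g (g⁻¹ • x), smul_inv_smul]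

end PermutationRepresentation

section Irreducibility

open Module MulAction

variable {k G X : Type*} [Field k] [LinearOrder k] [IsStrictOrderedRing k] [Group G]
  [MulAction G X]

theorem exists_isCompl_mem_invtSubmodule [Finite X] {U : Submodule k (X → k)}
    (hU : U ∈ (permRep k G X).invtSubmodule) :
    ∃ C ∈ (permRep k G X).invtSubmodule, IsCompl U C := by
  have := Fintype.ofFinite X
  let β : LinearMap.BilinForm k (X → k) := dotProductBilin k k
  have adjoint (g : G) (u v : X → k) :
      u ⬝ᵥ permRep k G X g v = permRep k G X g⁻¹ u ⬝ᵥ v := by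
    simp only [dotProduct, permRep_apply, inv_inv]
    rw [← Equiv.sum_comp (toPerm g)]
    simp
  refine ⟨β.orthogonal U, (Representation.mem_invtSubmodule _).2 fun g v hv u hu => ?_, ?_⟩
  · exact (adjoint g u v).trans (hv _ ((Representation.mem_invtSubmodule _).1 hU g⁻¹ hu))
  · have isRefl : β.IsRefl := fun u v huv => (dotProduct_comm v u).trans huv
    refine (LinearMap.BilinForm.isCompl_orthogonal_iff_disjoint isRefl).2 ?_
    exact Submodule.disjoint_def.2 fun u hu hu' => dotProduct_self_eq_zero.1 (hu' u hu)

theorem eq_bot_or_eq_of_finrank_inf_zonal_le_one [Finite X] [IsPretransitive G X] {x₀ : X}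
    {U U' : Submodule k (X → k)} (hU : U ∈ (permRep k G X).invtSubmodule)
    (hU' : U' ∈ (permRep k G X).invtSubmodule) (hle : U' ≤ U)
    (hrank : finrank k ↥(U ⊓ zonal k G x₀) ≤ 1) : U' = ⊥ ∨ U' = U := by
  refine or_iff_not_imp_left.2 fun hne => ?_
  obtain ⟨C, hC, hU'C⟩ := exists_isCompl_mem_invtSubmodule hU'
  obtain ⟨D, hD, hUCD⟩ := exists_isCompl_mem_invtSubmodule (Sublattice.inf_mem hU hC)
  have zonal_eq : U' ⊓ zonal k G x₀ = U ⊓ zonal k G x₀ :=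
    Submodule.eq_of_le_of_finrank_le (inf_le_inf_right _ hle) <| hrank.trans <|
      Submodule.one_le_finrank_iff.2 <| inf_zonal_ne_bot hU' hC hU'C hne x₀
  have inf_compl : U ⊓ C = ⊥ := by
    by_contra h
    refine inf_zonal_ne_bot (Sublattice.inf_mem hU hC) hD hUCD h x₀ ?_
    rw [inf_right_comm, ← zonal_eq, inf_right_comm, hU'C.inf_eq_bot, bot_inf_eq]
  calc U' = U' ⊔ C ⊓ U := by rw [inf_comm, inf_compl, sup_bot_eq]
    _ = U := by rw [← sup_inf_assoc_of_le C hle, hU'C.sup_eq_top, top_inf_eq]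

theorem eq_bot_or_eq_of_iSupIndep_of_card_orbits_le [Finite X] [IsPretransitive G X]
    {ι : Type*} [Fintype ι] {U : ι → Submodule k (X → k)}
    (hU : ∀ i, U i ∈ (permRep k G X).invtSubmodule) (hind : iSupIndep U)
    (hne : ∀ i, U i ≠ ⊥) {x₀ : X}
    (hcard : Nat.card (orbitRel.Quotient (stabilizer G x₀) X) ≤ Fintype.card ι) (i : ι)
    {U' : Submodule k (X → k)} (hU' : U' ∈ (permRep k G X).invtSubmodule) (hle : U' ≤ U i) :
    U' = ⊥ ∨ U' = U i := by
  have one_le (j : ι) : 1 ≤ finrank k ↥(U j ⊓ zonal k G x₀) := by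
    obtain ⟨C, hC, hUC⟩ := exists_isCompl_mem_invtSubmodule (hU j)
    exact Submodule.one_le_finrank_iff.2 (inf_zonal_ne_bot (hU j) hC hUC (hne j) x₀)
  refine eq_bot_or_eq_of_finrank_inf_zonal_le_one (hU i) hU' hle (x₀ := x₀) ?_
  by_contra! one_lt
  have := calc
    Fintype.card ι = ∑ _ : ι, 1 := by simp
    _ < ∑ j, finrank k ↥(U j ⊓ zonal k G x₀) :=
      Finset.sum_lt_sum (fun j _ => one_le j) ⟨i, Finset.mem_univ i, one_lt⟩
    _ ≤ finrank k (zonal k G x₀) :=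
      sum_finrank_le_finrank_of_iSupIndep (hind.mono fun _ => inf_le_left) fun _ => inf_le_right
    _ ≤ Nat.card (orbitRel.Quotient (stabilizer G x₀) X) := finrank_zonal_le x₀
    _ ≤ Fintype.card ι := hcard
  exact this.false

end Irreducibility

section Lines

/-- The lines of the cubic surface, as a type. -/
abbrev Line : Type := {L : Fin 7 → ℤ // IsLine L}

instance : DecidablePred IsLine := fun L => inferInstanceAs (Decidable (B L L = -1 ∧ B L K = -1))

theorem abs_le_one_of_sum_sq_le_abs_sum {ι : Type*} [Fintype ι] {x : ι → ℤ}
    (hx : ∑ i, x i ^ 2 ≤ |∑ i, x i|) (i : ι) : |x i| ≤ 1 := by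
  by_contra! hi
  have := calc
    |∑ j, x j| ≤ ∑ j, |x j| := Finset.abs_sum_le_sum_abs _ _
    _ < ∑ j, x j ^ 2 := Finset.sum_lt_sum (fun j _ => sq_abs (x j) ▸ Int.le_self_sq |x j|)
      ⟨i, Finset.mem_univ i, by nlinarith [sq_abs (x i)]⟩
    _ ≤ |∑ j, x j| := hx
  exact this.false

theorem B_self (x : Fin 7 → ℤ) : B x x = x 0 ^ 2 - ∑ i : Fin 6, x i.succ ^ 2 := by
  simp only [B, Fin.sum_univ_six, Fin.reduceSucc]
  ring

theorem B_K (x : Fin 7 → ℤ) : B x K = -3 * x 0 - ∑ i : Fin 6, x i.succ := by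
  simp only [B, K, Fin.sum_univ_six, Fin.reduceSucc, Matrix.cons_val]
  ring

/-- A box containing all lines; it makes the lines enumerable. -/
noncomputable def lineBox : Finset (Fin 7 → ℤ) :=
  Finset.Icc ![0, -1, -1, -1, -1, -1, -1] ![2, 1, 1, 1, 1, 1, 1]

theorem IsLine.mem_lineBox {L : Fin 7 → ℤ} (hL : IsLine L) : L ∈ lineBox := by
  have sum_eq : ∑ i : Fin 6, L i.succ = 1 - 3 * L 0 := by
    linarith [hL.2, B_K L]
  have sum_sq_eq : ∑ i : Fin 6, L i.succ ^ 2 = L 0 ^ 2 + 1 := by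
    linarith [hL.1, B_self L]
  have cauchy_schwarz : (1 - 3 * L 0) ^ 2 ≤ 6 * (L 0 ^ 2 + 1) := by
    simpa [sum_eq, sum_sq_eq] using
      sq_sum_le_card_mul_sum_sq (s := Finset.univ) (f := fun i : Fin 6 => L i.succ)
  have degree_nonneg : 0 ≤ L 0 := by nlinarith
  have degree_le_two : L 0 ≤ 2 := by nlinarith
  have multiplicity_le_one (i : Fin 6) : |L i.succ| ≤ 1 := by
    refine abs_le_one_of_sum_sq_le_abs_sum (x := fun i => L i.succ) ?_ i
    rw [sum_eq, sum_sq_eq]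
    interval_cases L 0 <;> decide
  simp only [lineBox, Finset.mem_Icc, Pi.le_def, ← forall_and]
  refine Fin.cases ⟨degree_nonneg, degree_le_two⟩ fun i => ?_
  fin_cases i <;> exact abs_le.1 (multiplicity_le_one _)

noncomputable instance : Fintype Line :=
  Fintype.subtype (lineBox.filter IsLine) fun L => by simpa using IsLine.mem_lineBox

/-- The exceptional curve over the first blown-up point, serving as base point. -/
def exceptionalLine : Line := ⟨![0, 1, 0, 0, 0, 0, 0], by decide⟩

theorem card_line : Fintype.card Line = 27 := by decide +kernel

theorem sum_B_line (L : Line) : ∑ M : Line, B L M = 9 := by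
  revert L; decide +kernel

theorem sum_B_mul_B_line (L M : Line) : ∑ N : Line, B L N * B N M = -6 * B L M + 5 := by
  revert L M; decide +kernel

theorem B_exceptionalLine_mem (L : Line) : B exceptionalLine L ∈ ({-1, 0, 1} : Finset ℤ) := by
  revert L; decide +kernel

theorem exists_skew_skew (L M : Line) : ∃ N : Line, B L N = 0 ∧ B N M = 0 := by
  revert L M; decide +kernel

theorem exists_skew_skew_of_B_exceptionalLine_eq (L M : Line)
    (h : B exceptionalLine L = B exceptionalLine M) (hne : L ≠ M) :
    ∃ N : Line, B L N = 0 ∧ B N M = 0 ∧ B exceptionalLine N = B exceptionalLine L := by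
  revert L M; decide +kernel

end Lines

section WeylGroup

open MulAction

theorem IsLine.map {g : (Fin 7 → ℤ) ≃ₗ[ℤ] (Fin 7 → ℤ)} (hg : g ∈ Wset) {L : Fin 7 → ℤ}
    (hL : IsLine L) : IsLine (g L) :=
  ⟨(hg.1 L L).trans hL.1, by rw [← hL.2, ← hg.1 L K, hg.2]⟩

/-- `Wset` as a subgroup of the linear automorphisms of the lattice. -/
def weylGroup : Subgroup ((Fin 7 → ℤ) ≃ₗ[ℤ] (Fin 7 → ℤ)) where
  carrier := Wset
  mul_mem' {g h} hg hh := ⟨fun x y => (hg.1 _ _).trans (hh.1 x y), (congrArg g hh.2).trans hg.2⟩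
  one_mem' := ⟨fun _ _ => rfl, rfl⟩
  inv_mem' {g} hg := ⟨fun x y => by simpa using (hg.1 (g⁻¹ x) (g⁻¹ y)).symm, by
    simpa using (congrArg ⇑(g⁻¹) hg.2).symm⟩

instance : MulAction weylGroup Line where
  smul g L := ⟨g.1 L, L.2.map g.2⟩
  one_smul _ := rfl
  mul_smul _ _ _ := rfl

theorem coe_weylGroup_smul (g : weylGroup) (L : Line) : (↑(g • L) : Fin 7 → ℤ) = g.1 L := rfl

theorem B_smul_smul (g : weylGroup) (L M : Line) : B ↑(g • L) ↑(g • M) = B L M := g.2.1 L M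

theorem isWInvariant_iff {U : Submodule ℚ Vq} :
    IsWInvariant U ↔ U ∈ (permRep ℚ weylGroup Line).invtSubmodule := by
  rw [Representation.mem_invtSubmodule]
  constructor
  · intro hU g v hv
    refine hU g g.2 v hv _ fun L M hLM => ?_
    rw [permRep_apply, inv_smul_eq_iff.2 (Subtype.ext hLM.symm)]
  · intro hU g hg v hv w hw
    have w_eq : w = permRep ℚ weylGroup Line ⟨g, hg⟩ v := funext fun M =>
      hw _ M (congrArg Subtype.val (smul_inv_smul (⟨g, hg⟩ : weylGroup) M))
    exact w_eq ▸ hU ⟨g, hg⟩ hv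

/-- The intersection form `B`, bundled as a bilinear form. -/
def intersectionForm : LinearMap.BilinForm ℤ (Fin 7 → ℤ) :=
  LinearMap.mk₂ ℤ B
    (fun _ _ _ => by simp only [B, Pi.add_apply]; ring)
    (fun _ _ _ => by simp only [B, Pi.smul_apply, smul_eq_mul]; ring)
    (fun _ _ _ => by simp only [B, Pi.add_apply]; ring)
    (fun _ _ _ => by simp only [B, Pi.smul_apply, smul_eq_mul]; ring)

theorem intersectionForm_apply (x y : Fin 7 → ℤ) : intersectionForm x y = B x y := rfl

theorem B_comm (x y : Fin 7 → ℤ) : B x y = B y x := by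
  simp only [B, mul_comm]

/-- The reflection `x ↦ x + ⟨r, x⟩ r` in a root `r` of norm `-2`. -/
def rootReflection {r : Fin 7 → ℤ} (hr : B r r = -2) : (Fin 7 → ℤ) ≃ₗ[ℤ] (Fin 7 → ℤ) :=
  Module.reflection (x := r) (f := -intersectionForm r) (by simp [intersectionForm_apply, hr])

theorem rootReflection_apply {r : Fin 7 → ℤ} (hr : B r r = -2) (x : Fin 7 → ℤ) :
    rootReflection hr x = x + B r x • r := by
  simp [rootReflection, Module.reflection_apply, intersectionForm_apply]

theorem rootReflection_mem_Wset {r : Fin 7 → ℤ} (hr : B r r = -2) (hrK : B r K = 0) :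
    rootReflection hr ∈ Wset := by
  refine ⟨fun x y => ?_, by simp [rootReflection_apply, hrK]⟩
  simp only [rootReflection_apply, ← intersectionForm_apply, map_add, map_smul,
    LinearMap.add_apply, LinearMap.smul_apply, smul_eq_mul]
  simp only [intersectionForm_apply, hr, B_comm x r]
  ring

theorem exists_smul_eq_of_skew {L M : Line} (hLM : B L M = 0) :
    ∃ g : weylGroup, g • L = M ∧ ∀ N : Line, B L N = B M N → g • N = N := by
  have B_sub (x : Fin 7 → ℤ) : B (L.1 - M.1) x = B L x - B M x :=
    LinearMap.map_sub₂ intersectionForm L.1 M.1 x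
  have norm_root : B (L.1 - M.1) (L.1 - M.1) = -2 := by
    rw [B_sub, B_comm L, B_comm M, B_sub, B_sub, B_comm M L, hLM, L.2.1, M.2.1]
    norm_num
  have root_K : B (L.1 - M.1) K = 0 := by rw [B_sub, L.2.2, M.2.2, sub_self]
  refine ⟨⟨rootReflection norm_root, rootReflection_mem_Wset norm_root root_K⟩,
    Subtype.ext ?_, fun N hN => Subtype.ext ?_⟩ <;>
    rw [coe_weylGroup_smul, rootReflection_apply, B_sub]
  · rw [L.2.1, B_comm M, hLM]
    module
  · rw [hN, sub_self, zero_smul, add_zero]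

instance : IsPretransitive weylGroup Line where
  exists_smul_eq L M := by
    obtain ⟨N, hLN, hNM⟩ := exists_skew_skew L M
    obtain ⟨g, rfl, -⟩ := exists_smul_eq_of_skew hLN
    obtain ⟨h, rfl, -⟩ := exists_smul_eq_of_skew hNM
    exact ⟨h * g, mul_smul h g L⟩

theorem exists_mem_stabilizer_smul_eq {L M : Line}
    (h : B exceptionalLine L = B exceptionalLine M) :
    ∃ g ∈ stabilizer weylGroup exceptionalLine, g • L = M := by
  obtain rfl | hne := eq_or_ne L M
  · exact ⟨1, one_mem _, one_smul _ L⟩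
  obtain ⟨N, hLN, hNM, hN⟩ := exists_skew_skew_of_B_exceptionalLine_eq L M h hne
  obtain ⟨g, rfl, hg⟩ := exists_smul_eq_of_skew hLN
  obtain ⟨g', rfl, hg'⟩ := exists_smul_eq_of_skew hNM
  refine ⟨g' * g, mul_mem (hg' _ ?_) (hg _ ?_), mul_smul g' g L⟩
  · rw [B_comm, hN, h, B_comm]
  · rw [B_comm, ← hN, B_comm]

theorem card_orbits_stabilizer_exceptionalLine_le :
    Nat.card (orbitRel.Quotient (stabilizer weylGroup exceptionalLine) Line) ≤ 3 := by
  let invariant (q : orbitRel.Quotient (stabilizer weylGroup exceptionalLine) Line) :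
      ({-1, 0, 1} : Finset ℤ) := ⟨B exceptionalLine q.out, B_exceptionalLine_mem _⟩
  have invariant_injective : Function.Injective invariant := fun p q hpq => by
    obtain ⟨g, hg, hgp⟩ := exists_mem_stabilizer_smul_eq (Subtype.ext_iff.1 hpq)
    rw [← p.out_eq, ← q.out_eq]
    exact (Quotient.sound (s := orbitRel _ Line) ⟨⟨g, hg⟩, hgp⟩).symm
  exact (Nat.card_le_card_of_injective invariant invariant_injective).trans_eq
    (Nat.card_eq_finsetCard _)

end WeylGroup

section IntersectionMatrix

open Module Polynomial

/-- The matrix of intersection numbers of the lines. -/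
def intersectionMatrix : Matrix Line Line ℚ := .of fun L M => (B L M : ℚ)

theorem intersectionMatrix_mul_self : intersectionMatrix * intersectionMatrix =
    (-6 : ℚ) • intersectionMatrix + (5 : ℚ) • .of fun _ _ => 1 := by
  ext L M
  simpa [intersectionMatrix, Matrix.mul_apply] using
    congrArg (Int.cast (R := ℚ)) (sum_B_mul_B_line L M)

theorem intersectionMatrix_mul_ones :
    intersectionMatrix * .of (fun _ _ => 1) = (9 : ℚ) • Matrix.of fun _ _ => 1 := by
  ext L M
  simpa [intersectionMatrix, Matrix.mul_apply] using congrArg (Int.cast (R := ℚ)) (sum_B_line L)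

theorem intersectionMatrix_cubic : intersectionMatrix ^ 3 =
    (3 : ℚ) • intersectionMatrix ^ 2 + (54 : ℚ) • intersectionMatrix := by
  have ones_eq : (5 : ℚ) • Matrix.of (fun _ _ : Line => 1) =
      intersectionMatrix ^ 2 + (6 : ℚ) • intersectionMatrix := by
    rw [sq, intersectionMatrix_mul_self]
    module
  calc intersectionMatrix ^ 3
    _ = intersectionMatrix * (intersectionMatrix * intersectionMatrix) := by noncomm_ring
    _ = (-6 : ℚ) • intersectionMatrix ^ 2 + (9 : ℚ) • (5 : ℚ) • .of fun _ _ => 1 := by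
      rw [intersectionMatrix_mul_self, mul_add, Matrix.mul_smul, Matrix.mul_smul,
        intersectionMatrix_mul_ones, smul_comm 5, sq]
    _ = (3 : ℚ) • intersectionMatrix ^ 2 + (54 : ℚ) • intersectionMatrix := by
      rw [ones_eq]
      module

theorem trace_intersectionMatrix : intersectionMatrix.trace = -27 := by
  have diag (L : Line) : intersectionMatrix L L = -1 := by
    simp [intersectionMatrix, L.2.1]
  simp [Matrix.trace, diag, card_line]

theorem trace_intersectionMatrix_sq : (intersectionMatrix ^ 2).trace = 297 := by
  have trace_ones : (Matrix.of fun _ _ : Line => (1 : ℚ)).trace = 27 := by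
    simp [Matrix.trace, card_line]
  rw [sq, intersectionMatrix_mul_self, Matrix.trace_add, Matrix.trace_smul, Matrix.trace_smul,
    trace_intersectionMatrix, trace_ones]
  norm_num

/-- The eigenvalues of the intersection matrix, in increasing order of multiplicity. -/
def lineEigenvalue : Fin 3 → ℚ := ![9, -6, 0]

/-- The eigenspaces of the intersection matrix, which turn out to be the irreducible summands. -/
noncomputable def lineEigenspace (i : Fin 3) : Submodule ℚ Vq :=
  End.eigenspace intersectionMatrix.toLin' (lineEigenvalue i)

theorem aeval_prod_intersectionMatrix :
    aeval intersectionMatrix.toLin' (∏ i, (X - C (lineEigenvalue i))) = 0 := by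
  have prod_eq : ∏ i, (X - C (lineEigenvalue i)) = X ^ 3 - (C 3 * X ^ 2 + C 54 * X) := by
    simp only [Fin.prod_univ_three, lineEigenvalue, Matrix.cons_val, map_ofNat, map_neg, map_zero]
    ring
  have cubic := congrArg Matrix.toLin' intersectionMatrix_cubic
  simp only [Matrix.toLin'_pow, map_add, map_smul] at cubic
  simp [prod_eq, cubic, ← Algebra.smul_def]

theorem isInternal_lineEigenspace : DirectSum.IsInternal lineEigenspace :=
  isInternal_eigenspace_of_aeval_prod_eq_zero (by decide) aeval_prod_intersectionMatrix

theorem finrank_lineEigenspace (i : Fin 3) : finrank ℚ (lineEigenspace i) = ![1, 6, 20] i := by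
  have trace_pow (n : ℕ) := calc (intersectionMatrix ^ n).trace
    _ = LinearMap.trace ℚ Vq (intersectionMatrix.toLin' ^ n) := by
      rw [← Matrix.toLin'_pow, Matrix.trace_toLin'_eq]
    _ = ∑ i, lineEigenvalue i ^ n * finrank ℚ (lineEigenspace i) :=
      trace_pow_eq_sum_finrank_eigenspace isInternal_lineEigenspace n
  simp only [Fin.sum_univ_three, lineEigenvalue, Matrix.cons_val] at trace_pow
  have trace_zero : (27 : ℚ) = finrank ℚ (lineEigenspace 0) + finrank ℚ (lineEigenspace 1) +
      finrank ℚ (lineEigenspace 2) := by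
    simpa [card_line] using trace_pow 0
  have trace_one : (-27 : ℚ) = 9 * finrank ℚ (lineEigenspace 0) +
      -6 * finrank ℚ (lineEigenspace 1) := by
    simpa [trace_intersectionMatrix] using trace_pow 1
  have trace_two : (297 : ℚ) = 81 * finrank ℚ (lineEigenspace 0) +
      36 * finrank ℚ (lineEigenspace 1) := by
    linarith [trace_pow 2, trace_intersectionMatrix_sq]
  have finrank_zero : (finrank ℚ (lineEigenspace 0) : ℚ) = (1 : ℕ) := by push_cast; linarith
  have finrank_one : (finrank ℚ (lineEigenspace 1) : ℚ) = (6 : ℕ) := by push_cast; linarith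
  have finrank_two : (finrank ℚ (lineEigenspace 2) : ℚ) = (20 : ℕ) := by push_cast; linarith
  fin_cases i
  exacts [Nat.cast_injective finrank_zero, Nat.cast_injective finrank_one,
    Nat.cast_injective finrank_two]

theorem lineEigenspace_mem_invtSubmodule (i : Fin 3) :
    lineEigenspace i ∈ (permRep ℚ weylGroup Line).invtSubmodule :=
  eigenspace_toLin'_mem_invtSubmodule
    (fun g L M => congrArg (Int.cast (R := ℚ)) (B_smul_smul g L M)) _

theorem lineEigenspace_irreducible (i : Fin 3) {U : Submodule ℚ Vq} (hle : U ≤ lineEigenspace i)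
    (hU : IsWInvariant U) : U = ⊥ ∨ U = lineEigenspace i := by
  refine eq_bot_or_eq_of_iSupIndep_of_card_orbits_le lineEigenspace_mem_invtSubmodule
    isInternal_lineEigenspace.submodule_iSupIndep (fun j => ?_)
    card_orbits_stabilizer_exceptionalLine_le i (isWInvariant_iff.1 hU) hle
  rw [← Submodule.one_le_finrank_iff, finrank_lineEigenspace]
  fin_cases j <;> decide

end IntersectionMatrix

/-- The permutation representation of the Weyl group `W(E₆)` on the 27 lines decomposes
into a direct sum of irreducible representations of dimensions 1, 6 and 20. -/
theorem perm_rep_decomposition :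
    (∀ g ∈ Wset, ∀ L : Fin 7 → ℤ, IsLine L → IsLine (g L)) ∧
    ∃ U₁ U₂ U₃ : Submodule ℚ Vq,
      IsWInvariant U₁ ∧ IsWInvariant U₂ ∧ IsWInvariant U₃ ∧
      Module.finrank ℚ ↥U₁ = 1 ∧ Module.finrank ℚ ↥U₂ = 6 ∧ Module.finrank ℚ ↥U₃ = 20 ∧
      U₁ ⊔ U₂ ⊔ U₃ = ⊤ ∧
      U₁ ⊓ (U₂ ⊔ U₃) = ⊥ ∧ U₂ ⊓ (U₁ ⊔ U₃) = ⊥ ∧ U₃ ⊓ (U₁ ⊔ U₂) = ⊥ ∧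
      (∀ U ≤ U₁, IsWInvariant U → U = ⊥ ∨ U = U₁) ∧
      (∀ U ≤ U₂, IsWInvariant U → U = ⊥ ∨ U = U₂) ∧
      (∀ U ≤ U₃, IsWInvariant U → U = ⊥ ∨ U = U₃) := by
  have invariant (i : Fin 3) : IsWInvariant (lineEigenspace i) :=
    isWInvariant_iff.2 (lineEigenspace_mem_invtSubmodule i)
  have indep := isInternal_lineEigenspace.submodule_iSupIndep
  have span : lineEigenspace 0 ⊔ lineEigenspace 1 ⊔ lineEigenspace 2 = ⊤ := by
    rw [← isInternal_lineEigenspace.submodule_iSup_eq_top, iSup_fin_three]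
  have inf_sup_eq_bot {i j k : Fin 3} (hij : i ≠ j) (hik : i ≠ k) :
      lineEigenspace i ⊓ (lineEigenspace j ⊔ lineEigenspace k) = ⊥ :=
    ((indep i).mono_right (sup_le (le_iSup₂_of_le j hij.symm le_rfl)
      (le_iSup₂_of_le k hik.symm le_rfl))).eq_bot
  exact ⟨fun g hg L hL => hL.map hg, lineEigenspace 0, lineEigenspace 1, lineEigenspace 2,
    invariant 0, invariant 1, invariant 2,
    finrank_lineEigenspace 0, finrank_lineEigenspace 1, finrank_lineEigenspace 2, span,
    inf_sup_eq_bot (by decide) (by decide), inf_sup_eq_bot (by decide) (by decide),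
    inf_sup_eq_bot (by decide) (by decide),
    fun _ => lineEigenspace_irreducible 0, fun _ => lineEigenspace_irreducible 1,
    fun _ => lineEigenspace_irreducible 2⟩
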